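/- arXiv:1007.4488 — 3 statements merged into one kernel-verified Lean document; each statement's English description precedes it below -/
import Mathlib

section
/- Let H₁ and H₂ be complex Hilbert spaces and A a closed, densely defined linear operator from H₁ to H₂ with Hilbert-space adjoint A*. Define R = I + A*A with domain Dom(R) = {x ∈ Dom A : Ax ∈ Dom A*}, and S = I + AA* with domain Dom(S) = {x ∈ Dom A* : A*x ∈ Dom A}. Then R : Dom(R) → H₁ and S : Dom(S) → H₂ are bijective linear maps, and their inverses R⁻¹ : H₁ → H₁ and S⁻¹ : H₂ → H₂ are continuous (bounded) self-adjoint operators. -/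
open scoped LinearPMap

/-!
Symmetry and surjectivity of `R = I + A*A` already give the whole conclusion: a symmetric surjective
operator is injective, its inverse is symmetric and everywhere defined, and such an operator is
bounded by the Hellinger–Toeplitz theorem. Surjectivity comes from the orthogonal decomposition
`H₁ × H₂ = graph A ⊕ {(-A*w, w) : w ∈ Dom A*}`, valid because the graph of `A` is closed:
decomposing `(y, 0)` solves `x + A*Ax = y`, and decomposing `(0, y)` solves `w + AA*w = y`.
-/

section NaturalComp

variable {K X Y Z : Type*} [Ring K] [AddCommGroup X] [Module K X] [AddCommGroup Y] [Module K Y]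
  [AddCommGroup Z] [Module K Z]

/-- The composition `S T` of unbounded operators on its natural domain
`{x ∈ Dom T : T x ∈ Dom S}`; `LinearPMap.comp` instead requires `T` to map all of `Dom T` into
`Dom S`. -/
noncomputable def naturalComp (S : Y →ₗ.[K] Z) (T : X →ₗ.[K] Y) : X →ₗ.[K] Z where
  domain := (S.domain.comap T.toFun).map T.domain.subtype
  toFun := S.toFun ∘ₗ T.toFun.submoduleComap S.domain ∘ₗ
    (T.domain.equivSubtypeMap (S.domain.comap T.toFun)).symm.toLinearMap

theorem mem_graph_naturalComp {S : Y →ₗ.[K] Z} {T : X →ₗ.[K] Y} {x : X} {z : Z} :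
    (x, z) ∈ (naturalComp S T).graph ↔ ∃ y, (x, y) ∈ T.graph ∧ (y, z) ∈ S.graph := by
  let e := T.domain.equivSubtypeMap (S.domain.comap T.toFun)
  have naturalComp_apply (w : S.domain.comap T.toFun) : naturalComp S T (e w) = S ⟨T w, w.2⟩ :=
    congrArg (fun v : S.domain.comap T.toFun => S ⟨T v, v.2⟩) (e.symm_apply_apply w)
  constructor
  · intro hxz
    obtain ⟨v, rfl, rfl⟩ := (LinearPMap.mem_graph_iff _).1 hxz
    obtain ⟨w, rfl⟩ := e.surjective v
    exact ⟨T w, T.mem_graph w, naturalComp_apply w ▸ S.mem_graph ⟨T w, w.2⟩⟩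
  · rintro ⟨y, hxy, hyz⟩
    obtain ⟨x, rfl, rfl⟩ := T.mem_graph_iff.1 hxy
    have hTx := LinearPMap.mem_domain_of_mem_graph hyz
    obtain rfl := (LinearPMap.image_iff hTx).2 hyz
    exact (LinearPMap.mem_graph_iff _).2 ⟨e ⟨x, hTx⟩, rfl, naturalComp_apply ⟨x, hTx⟩⟩

theorem mem_graph_vadd {L : X →ₗ[K] Y} {T : X →ₗ.[K] Y} {x : X} {y : Y} :
    (x, y) ∈ (L +ᵥ T).graph ↔ ∃ z, (x, z) ∈ T.graph ∧ L x + z = y := by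
  simp only [LinearPMap.mem_graph_iff]
  constructor
  · rintro ⟨v, rfl, rfl⟩
    exact ⟨T v, ⟨v, rfl, rfl⟩, rfl⟩
  · rintro ⟨_, ⟨v, rfl, rfl⟩, rfl⟩
    exact ⟨v, rfl, rfl⟩

theorem mem_graph_id_vadd_naturalComp {S : Y →ₗ.[K] X} {T : X →ₗ.[K] Y} {x y : X} :
    (x, y) ∈ ((LinearMap.id : X →ₗ[K] X) +ᵥ naturalComp S T).graph ↔
      ∃ (hx : x ∈ T.domain) (hTx : T ⟨x, hx⟩ ∈ S.domain), x + S ⟨T ⟨x, hx⟩, hTx⟩ = y := by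
  rw [mem_graph_vadd]
  constructor
  · rintro ⟨z, hxz, rfl⟩
    obtain ⟨w, hxw, hwz⟩ := mem_graph_naturalComp.1 hxz
    obtain ⟨x, rfl, rfl⟩ := T.mem_graph_iff.1 hxw
    have hTx := LinearPMap.mem_domain_of_mem_graph hwz
    obtain rfl := (LinearPMap.image_iff hTx).2 hwz
    exact ⟨x.2, hTx, rfl⟩
  · rintro ⟨hx, hTx, rfl⟩
    exact ⟨_, mem_graph_naturalComp.2 ⟨_, T.mem_graph ⟨x, hx⟩, S.mem_graph ⟨_, hTx⟩⟩, rfl⟩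

end NaturalComp

section FormalAdjoint

variable {𝕜 E F G : Type*} [RCLike 𝕜]
  [NormedAddCommGroup E] [InnerProductSpace 𝕜 E]
  [NormedAddCommGroup F] [InnerProductSpace 𝕜 F]
  [NormedAddCommGroup G] [InnerProductSpace 𝕜 G]

theorem isFormalAdjoint_iff_forall_mem_graph {T : E →ₗ.[𝕜] F} {S : F →ₗ.[𝕜] E} :
    T.IsFormalAdjoint S ↔ ∀ ⦃x y⦄, (x, y) ∈ T.graph → ∀ ⦃w z⦄, (w, z) ∈ S.graph →
      inner 𝕜 y w = inner 𝕜 x z := by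
  refine ⟨fun h x y hxy w z hwz => ?_, fun h x w => h (T.mem_graph x) (S.mem_graph w)⟩
  obtain ⟨x, rfl, rfl⟩ := T.mem_graph_iff.1 hxy
  obtain ⟨w, rfl, rfl⟩ := S.mem_graph_iff.1 hwz
  exact h x w

theorem isFormalAdjoint_naturalComp {T : E →ₗ.[𝕜] F} {T' : F →ₗ.[𝕜] E} {S : F →ₗ.[𝕜] G}
    {S' : G →ₗ.[𝕜] F} (hT : T.IsFormalAdjoint T') (hS : S.IsFormalAdjoint S') :
    (naturalComp S T).IsFormalAdjoint (naturalComp T' S') := by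
  rw [isFormalAdjoint_iff_forall_mem_graph] at hT hS ⊢
  intro x z hxz w v hwv
  obtain ⟨y, hxy, hyz⟩ := mem_graph_naturalComp.1 hxz
  obtain ⟨u, hwu, huv⟩ := mem_graph_naturalComp.1 hwv
  exact (hS hyz hwu).trans (hT hxy huv)

theorem isFormalAdjoint_self_vadd {L : E →ₗ[𝕜] E} {T : E →ₗ.[𝕜] E} (hL : L.IsSymmetric)
    (hT : T.IsFormalAdjoint T) : (L +ᵥ T).IsFormalAdjoint (L +ᵥ T) := fun x y => by
  simp only [LinearPMap.vadd_apply, inner_add_left, inner_add_right]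
  exact congrArg₂ (· + ·) (hL x y) (hT x y)

end FormalAdjoint

section SymmetricSurjective

variable {𝕜 E : Type*} [RCLike 𝕜] [NormedAddCommGroup E] [InnerProductSpace 𝕜 E]
  {R : E →ₗ.[𝕜] E}

theorem injective_of_isFormalAdjoint_self_of_surjective (hR : R.IsFormalAdjoint R)
    (hsurj : Function.Surjective R) : Function.Injective R := by
  intro x x' hxx'
  refine Subtype.ext (ext_inner_right 𝕜 fun y => ?_)
  obtain ⟨z, rfl⟩ := hsurj y
  rw [← hR x z, hxx', hR x' z]

theorem existsUnique_mem_graph_of_isFormalAdjoint_self_of_surjective (hR : R.IsFormalAdjoint R)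
    (hsurj : Function.Surjective R) (y : E) : ∃! x, (x, y) ∈ R.graph := by
  obtain ⟨x, rfl⟩ := hsurj y
  refine ⟨x, R.mem_graph x, fun x' hx' => ?_⟩
  obtain ⟨v, rfl, hv⟩ := R.mem_graph_iff.1 hx'
  rw [injective_of_isFormalAdjoint_self_of_surjective hR hsurj hv]

theorem exists_isSelfAdjoint_mem_graph_of_isFormalAdjoint_self_of_surjective [CompleteSpace E]
    (hR : R.IsFormalAdjoint R) (hsurj : Function.Surjective R) :
    ∃ B : E →L[𝕜] E, IsSelfAdjoint B ∧ ∀ y, (B y, y) ∈ R.graph := by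
  let e : R.domain ≃ₗ[𝕜] E := LinearEquiv.ofBijective R.toFun
    ⟨injective_of_isFormalAdjoint_self_of_surjective hR hsurj, hsurj⟩
  have apply_symm (y : E) : R (e.symm y) = y := e.apply_symm_apply y
  have symmetric : (R.domain.subtype ∘ₗ e.symm.toLinearMap).IsSymmetric := fun y z => by
    have h := hR (e.symm y) (e.symm z)
    rw [apply_symm, apply_symm] at h
    exact h.symm
  refine ⟨symmetric.toSelfAdjoint, symmetric.toSelfAdjoint.2, fun y => ?_⟩
  exact R.mem_graph_iff.2 ⟨e.symm y, rfl, apply_symm y⟩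

end SymmetricSurjective

section GraphDecomposition

variable {𝕜 E F : Type*} [RCLike 𝕜]
  [NormedAddCommGroup E] [InnerProductSpace 𝕜 E] [CompleteSpace E]
  [NormedAddCommGroup F] [InnerProductSpace 𝕜 F] [CompleteSpace F]

theorem exists_mem_mem_adjoint_of_isClosed {g : Submodule 𝕜 (E × F)}
    (hg : IsClosed (g : Set (E × F))) (u : E) (v : F) :
    ∃ x y w z, (x, y) ∈ g ∧ (w, z) ∈ g.adjoint ∧ x - z = u ∧ y + w = v := by
  let g₂ : Submodule 𝕜 (WithLp 2 (E × F)) :=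
    g.comap (WithLp.linearEquiv 2 𝕜 (E × F)).toLinearMap
  have : CompleteSpace g₂ :=
    (hg.preimage (WithLp.prod_continuous_ofLp 2 E F)).completeSpace_coe
  obtain ⟨p, hp, q, hq, hpq⟩ := g₂.exists_add_mem_mem_orthogonal (WithLp.toLp 2 (u, v))
  have hq_adjoint : (q.snd, -q.fst) ∈ g.adjoint := by
    rw [Submodule.mem_adjoint_iff]
    intro a b hab
    have inner_eq_zero := (g₂.mem_orthogonal q).1 hq (WithLp.toLp 2 (a, b)) hab
    rw [WithLp.prod_inner_apply] at inner_eq_zero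
    rw [inner_neg_right, sub_neg_eq_add, add_comm]
    exact inner_eq_zero
  refine ⟨p.fst, p.snd, q.snd, -q.fst, hp, hq_adjoint, ?_, ?_⟩
  · rw [sub_neg_eq_add]
    exact (congrArg WithLp.fst hpq).symm
  · exact (congrArg WithLp.snd hpq).symm

variable {A : E →ₗ.[𝕜] F}

theorem surjective_id_vadd_adjoint_naturalComp_self (hAd : Dense (A.domain : Set E))
    (hAc : A.IsClosed) :
    Function.Surjective ((LinearMap.id : E →ₗ[𝕜] E) +ᵥ naturalComp A† A) := fun y => by
  obtain ⟨x, Ax, w, z, hx, hw, hxz, hAxw⟩ := exists_mem_mem_adjoint_of_isClosed hAc y 0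
  have hAx : (Ax, -z) ∈ A†.graph := by
    rw [LinearPMap.adjoint_graph_eq_graph_adjoint hAd, eq_neg_of_add_eq_zero_left hAxw]
    exact neg_mem hw
  refine LinearPMap.mem_range_iff.2 ⟨x, mem_graph_vadd.2 ⟨-z, ?_, ?_⟩⟩
  · exact mem_graph_naturalComp.2 ⟨Ax, hx, hAx⟩
  · rwa [← sub_eq_add_neg]

theorem surjective_id_vadd_naturalComp_adjoint (hAd : Dense (A.domain : Set E))
    (hAc : A.IsClosed) :
    Function.Surjective ((LinearMap.id : F →ₗ[𝕜] F) +ᵥ naturalComp A A†) := fun y => by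
  obtain ⟨x, Ax, w, z, hx, hw, hxz, hAxw⟩ := exists_mem_mem_adjoint_of_isClosed hAc 0 y
  rw [← LinearPMap.adjoint_graph_eq_graph_adjoint hAd, ← sub_eq_zero.1 hxz] at hw
  refine LinearPMap.mem_range_iff.2 ⟨w, mem_graph_vadd.2 ⟨Ax, ?_, ?_⟩⟩
  · exact mem_graph_naturalComp.2 ⟨x, hw, hx⟩
  · rwa [LinearMap.id_apply, add_comm]

end GraphDecomposition

theorem stmt_0_general {𝕜 E F : Type*} [RCLike 𝕜]
    [NormedAddCommGroup E] [InnerProductSpace 𝕜 E] [CompleteSpace E]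
    [NormedAddCommGroup F] [InnerProductSpace 𝕜 F] [CompleteSpace F]
    (A : E →ₗ.[𝕜] F) (hAd : Dense (A.domain : Set E)) (hAc : A.IsClosed) :
    (∀ y : E, ∃! x : E, ∃ (hx : x ∈ A.domain) (hAx : A ⟨x, hx⟩ ∈ (A†).domain),
        x + A† ⟨A ⟨x, hx⟩, hAx⟩ = y) ∧
    (∀ y : F, ∃! x : F, ∃ (hx : x ∈ (A†).domain) (hAx : A† ⟨x, hx⟩ ∈ A.domain),
        x + A ⟨A† ⟨x, hx⟩, hAx⟩ = y) ∧
    (∃ Rinv : E →L[𝕜] E, IsSelfAdjoint Rinv ∧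
      ∀ y : E, ∃ (hx : Rinv y ∈ A.domain) (hAx : A ⟨Rinv y, hx⟩ ∈ (A†).domain),
        Rinv y + A† ⟨A ⟨Rinv y, hx⟩, hAx⟩ = y) ∧
    (∃ Sinv : F →L[𝕜] F, IsSelfAdjoint Sinv ∧
      ∀ y : F, ∃ (hx : Sinv y ∈ (A†).domain) (hAx : A† ⟨Sinv y, hx⟩ ∈ A.domain),
        Sinv y + A ⟨A† ⟨Sinv y, hx⟩, hAx⟩ = y) := by
  have formalAdjoint : A†.IsFormalAdjoint A := LinearPMap.adjoint_isFormalAdjoint hAd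
  have hR := isFormalAdjoint_self_vadd .id
    (isFormalAdjoint_naturalComp formalAdjoint.symm formalAdjoint)
  have hS := isFormalAdjoint_self_vadd .id
    (isFormalAdjoint_naturalComp formalAdjoint formalAdjoint.symm)
  have R_surjective := surjective_id_vadd_adjoint_naturalComp_self hAd hAc
  have S_surjective := surjective_id_vadd_naturalComp_adjoint hAd hAc
  simp only [← mem_graph_id_vadd_naturalComp]
  exact ⟨existsUnique_mem_graph_of_isFormalAdjoint_self_of_surjective hR R_surjective,
    existsUnique_mem_graph_of_isFormalAdjoint_self_of_surjective hS S_surjective,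
    exists_isSelfAdjoint_mem_graph_of_isFormalAdjoint_self_of_surjective hR R_surjective,
    exists_isSelfAdjoint_mem_graph_of_isFormalAdjoint_self_of_surjective hS S_surjective⟩

/-- **Von Neumann's lemma.** For a closed densely defined operator `A` between complex
Hilbert spaces, `R = I + A*A` (with domain `{x ∈ Dom A : Ax ∈ Dom A*}`) and
`S = I + AA*` (with domain `{x ∈ Dom A* : A*x ∈ Dom A}`) are bijective onto `H₁`
resp. `H₂`, and their inverses are bounded self-adjoint operators. -/
theorem stmt_0 {H₁ H₂ : Type*} [NormedAddCommGroup H₁] [InnerProductSpace ℂ H₁] [CompleteSpace H₁]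
    [NormedAddCommGroup H₂] [InnerProductSpace ℂ H₂] [CompleteSpace H₂]
    (A : H₁ →ₗ.[ℂ] H₂) (hAd : Dense (A.domain : Set H₁)) (hAc : A.IsClosed) :
    (∀ y : H₁, ∃! x : H₁, ∃ (hx : x ∈ A.domain) (hAx : A ⟨x, hx⟩ ∈ (A†).domain),
        x + A† ⟨A ⟨x, hx⟩, hAx⟩ = y) ∧
    (∀ y : H₂, ∃! x : H₂, ∃ (hx : x ∈ (A†).domain) (hAx : A† ⟨x, hx⟩ ∈ A.domain),
        x + A ⟨A† ⟨x, hx⟩, hAx⟩ = y) ∧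
    (∃ Rinv : H₁ →L[ℂ] H₁, IsSelfAdjoint Rinv ∧
      ∀ y : H₁, ∃ (hx : Rinv y ∈ A.domain) (hAx : A ⟨Rinv y, hx⟩ ∈ (A†).domain),
        Rinv y + A† ⟨A ⟨Rinv y, hx⟩, hAx⟩ = y) ∧
    (∃ Sinv : H₂ →L[ℂ] H₂, IsSelfAdjoint Sinv ∧
      ∀ y : H₂, ∃ (hx : Sinv y ∈ (A†).domain) (hAx : A† ⟨Sinv y, hx⟩ ∈ A.domain),
        Sinv y + A ⟨A† ⟨Sinv y, hx⟩, hAx⟩ = y) :=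
  stmt_0_general A hAd hAc
end

section
/- Let S := (I + TT*)⁻¹ + (I + T*T)⁻¹ − I, where (I + TT*)⁻¹ and (I + T*T)⁻¹ are the bounded self-adjoint inverses furnished by von Neumann's lemma. Then S is a bounded self-adjoint operator on H, the range of S is contained in Dom P, and (I + P)S = I on H; in particular I + P : Dom P → H is bijective with bounded inverse S. -/
open scoped LinearPMap

/-!
Everything rests on `BA = 0` and its adjoint `A†B† = 0`, for composable `A` and `B` (both equal to
`T` in the theorem). Put `S = (I + AA†)⁻¹ + (I + B†B)⁻¹ - I`. Since
`(I + AA†)⁻¹ - I = -AA†(I + AA†)⁻¹`, the operator `S` differs from `(I + B†B)⁻¹` by a map into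
`ran A ⊆ ker B`, so `B†BS = B†B(I + B†B)⁻¹`; symmetrically `AA†S = AA†(I + AA†)⁻¹`. Adding the two
gives `(I + B†B + AA†)S = I`. Finally, a symmetric operator with an everywhere defined right inverse
is injective, and that inverse is symmetric as well.
-/

section Algebra

variable {R E F G : Type*} [Ring R] [AddCommGroup E] [Module R E] [AddCommGroup F] [Module R F]
  [AddCommGroup G] [Module R G]

/-- The composite `g ∘ f` of partially defined maps on its maximal domain
`{x ∈ dom f | f x ∈ dom g}`. Unlike `LinearPMap.comp`, it does not require `f` to map into
`dom g`. -/
def maximalComp (g : F →ₗ.[R] G) (f : E →ₗ.[R] F) : E →ₗ.[R] G :=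
  g.comp (f.domRestrict ((g.domain.comap f.toFun).map f.domain.subtype)) <| by
    rintro ⟨_, ⟨x, hx, rfl⟩, _⟩
    exact hx

theorem mem_domain_maximalComp {g : F →ₗ.[R] G} {f : E →ₗ.[R] F} {x : E} :
    x ∈ (maximalComp g f).domain ↔ ∃ h : x ∈ f.domain, f ⟨x, h⟩ ∈ g.domain := by
  constructor
  · rintro ⟨⟨x, hx, rfl⟩, _⟩
    exact ⟨x.2, hx⟩
  · rintro ⟨h, hx⟩
    exact ⟨⟨⟨x, h⟩, hx, rfl⟩, h⟩

theorem maximalComp_apply {g : F →ₗ.[R] G} {f : E →ₗ.[R] F} {x : E}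
    (hx : x ∈ (maximalComp g f).domain) (hf : x ∈ f.domain) (hg : f ⟨x, hf⟩ ∈ g.domain) :
    maximalComp g f ⟨x, hx⟩ = g ⟨f ⟨x, hf⟩, hg⟩ :=
  rfl

theorem mem_graph_maximalComp {g : F →ₗ.[R] G} {f : E →ₗ.[R] F} {x : E} {z : G} :
    (x, z) ∈ (maximalComp g f).graph ↔ ∃ y, (x, y) ∈ f.graph ∧ (y, z) ∈ g.graph := by
  constructor
  · intro h
    have hx := (maximalComp g f).mem_domain_of_mem_graph h
    obtain ⟨hf, hg⟩ := mem_domain_maximalComp.1 hx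
    obtain rfl := ((maximalComp g f).image_iff hx).2 h
    exact ⟨f ⟨x, hf⟩, f.mem_graph ⟨x, hf⟩, g.mem_graph ⟨f ⟨x, hf⟩, hg⟩⟩
  · rintro ⟨y, hxy, hyz⟩
    have hf := f.mem_domain_of_mem_graph hxy
    obtain rfl := (f.image_iff hf).2 hxy
    have hg := g.mem_domain_of_mem_graph hyz
    obtain rfl := (g.image_iff hg).2 hyz
    exact (maximalComp g f).mem_graph ⟨x, mem_domain_maximalComp.2 ⟨hf, hg⟩⟩

theorem add_mem_graph_add {f g : E →ₗ.[R] F} {x : E} {y z : F} (hy : (x, y) ∈ f.graph)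
    (hz : (x, z) ∈ g.graph) : (x, y + z) ∈ (f + g).graph := by
  have hf := f.mem_domain_of_mem_graph hy
  have hg := g.mem_domain_of_mem_graph hz
  obtain rfl := (f.image_iff hf).2 hy
  obtain rfl := (g.image_iff hg).2 hz
  exact (f + g).mem_graph ⟨x, hf, hg⟩

/-- `ran f ⊆ ker g`, as for consecutive maps of a complex: the meaning of `g ∘ f = 0` for partially
defined maps, including that `f` maps into `dom g`. -/
def RangeLEKer (f : E →ₗ.[R] F) (g : F →ₗ.[R] G) : Prop :=
  ∀ x : f.domain, ∃ h : f x ∈ g.domain, g ⟨f x, h⟩ = 0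

theorem RangeLEKer.mem_graph {f : E →ₗ.[R] F} {g : F →ₗ.[R] G} (h : RangeLEKer f g) {x : E}
    {y : F} (hxy : (x, y) ∈ f.graph) : (y, 0) ∈ g.graph := by
  obtain ⟨u, rfl, rfl⟩ := f.mem_graph_iff.1 hxy
  obtain ⟨hu, hgu⟩ := h u
  exact hgu ▸ g.mem_graph ⟨f u, hu⟩

/-- `S` is an everywhere defined right inverse of the partially defined map `K`: it takes values
in `dom K`, and `K S = I`. -/
def IsRightInverse (K : E →ₗ.[R] F) (S : F → E) : Prop :=
  ∀ y, ∃ h : S y ∈ K.domain, K ⟨S y, h⟩ = y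

/-- The operator `I + K` on `dom K`; its right inverses are the `(I + K)⁻¹` of the paper. -/
abbrev idAdd (K : E →ₗ.[R] E) : E →ₗ.[R] E :=
  (LinearMap.id : E →ₗ[R] E) +ᵥ K

theorem isRightInverse_idAdd_iff {K : E →ₗ.[R] E} {S : E → E} :
    IsRightInverse (idAdd K) S ↔ ∀ y, (S y, y - S y) ∈ K.graph := by
  refine forall_congr' fun y ↦ ⟨?_, fun h ↦ ?_⟩
  · rintro ⟨h, hy⟩
    exact (K.image_iff h).1 (sub_eq_of_eq_add' hy.symm)
  · have hS : S y ∈ K.domain := K.mem_domain_of_mem_graph h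
    exact ⟨hS, add_eq_of_eq_sub' ((K.image_iff hS).2 h).symm⟩

theorem isRightInverse_idAdd_maximalComp_iff {g : F →ₗ.[R] E} {f : E →ₗ.[R] F} {S : E → E} :
    IsRightInverse (idAdd (maximalComp g f)) S ↔
      ∀ y, ∃ (h : S y ∈ f.domain) (h' : f ⟨S y, h⟩ ∈ g.domain), S y + g ⟨f ⟨S y, h⟩, h'⟩ = y := by
  refine forall_congr' fun y ↦ ⟨?_, ?_⟩
  · rintro ⟨h, hy⟩
    obtain ⟨hf, hg⟩ := mem_domain_maximalComp.1 h
    exact ⟨hf, hg, hy⟩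
  · rintro ⟨hf, hg, hy⟩
    have h : S y ∈ (maximalComp g f).domain := mem_domain_maximalComp.2 ⟨hf, hg⟩
    exact ⟨h, by rwa [LinearPMap.vadd_apply, maximalComp_apply h hf hg]⟩

theorem isRightInverse_idAdd_add_sub_id {A : E →ₗ.[R] F} {A' : F →ₗ.[R] E} {B : F →ₗ.[R] G}
    {B' : G →ₗ.[R] F} (hAB : RangeLEKer A B) (hBA' : RangeLEKer B' A') {M N : F → F}
    (hM : IsRightInverse (idAdd (maximalComp A A')) M)
    (hN : IsRightInverse (idAdd (maximalComp B' B)) N) :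
    IsRightInverse (idAdd (maximalComp B' B + maximalComp A A'))
      fun y ↦ M y + N y - y := by
  rw [isRightInverse_idAdd_iff] at hM hN ⊢
  intro y
  obtain ⟨a, hMa, haM⟩ := mem_graph_maximalComp.1 (hM y)
  obtain ⟨b, hNb, hbN⟩ := mem_graph_maximalComp.1 (hN y)
  have hSb : (M y + N y - y, b) ∈ B.graph := by
    have hS : M y + N y - y = N y - (y - M y) := by abel
    simpa only [hS, Prod.mk_sub_mk, sub_zero] using B.graph.sub_mem hNb (hAB.mem_graph haM)
  have hSa : (M y + N y - y, a) ∈ A'.graph := by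
    have hS : M y + N y - y = M y - (y - N y) := by abel
    simpa only [hS, Prod.mk_sub_mk, sub_zero] using A'.graph.sub_mem hMa (hBA'.mem_graph hbN)
  have hy : y - (M y + N y - y) = (y - N y) + (y - M y) := by abel
  rw [hy]
  exact add_mem_graph_add (mem_graph_maximalComp.2 ⟨b, hSb, hbN⟩)
    (mem_graph_maximalComp.2 ⟨a, hSa, haM⟩)

end Algebra

section FormalAdjoint

variable {𝕜 E F G : Type*} [RCLike 𝕜] [NormedAddCommGroup E] [InnerProductSpace 𝕜 E]
  [NormedAddCommGroup F] [InnerProductSpace 𝕜 F] [NormedAddCommGroup G] [InnerProductSpace 𝕜 G]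

theorem isFormalAdjoint_add {f g : E →ₗ.[𝕜] F} {f' g' : F →ₗ.[𝕜] E} (hf : f.IsFormalAdjoint f')
    (hg : g.IsFormalAdjoint g') : (f + g).IsFormalAdjoint (f' + g') := by
  intro x y
  simp only [LinearPMap.add_apply, inner_add_left, inner_add_right, hf ⟨x, x.2.1⟩ ⟨y, y.2.1⟩,
    hg ⟨x, x.2.2⟩ ⟨y, y.2.2⟩]

theorem isFormalAdjoint_idAdd {K K' : E →ₗ.[𝕜] E} (hK : K.IsFormalAdjoint K') :
    (idAdd K).IsFormalAdjoint (idAdd K') := by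
  intro x y
  simp only [LinearPMap.vadd_apply, LinearMap.id_apply, inner_add_left, inner_add_right, hK x y]

theorem isFormalAdjoint_maximalComp {f : E →ₗ.[𝕜] F} {f' : F →ₗ.[𝕜] E} {g : F →ₗ.[𝕜] G}
    {g' : G →ₗ.[𝕜] F} (hf : f.IsFormalAdjoint f') (hg : g.IsFormalAdjoint g') :
    (maximalComp g f).IsFormalAdjoint (maximalComp f' g') := by
  rintro ⟨x, hx⟩ ⟨z, hz⟩
  obtain ⟨hxf, hxg⟩ := mem_domain_maximalComp.1 hx
  obtain ⟨hzg, hzf⟩ := mem_domain_maximalComp.1 hz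
  calc inner 𝕜 (g ⟨f ⟨x, hxf⟩, hxg⟩) z = inner 𝕜 (f ⟨x, hxf⟩) (g' ⟨z, hzg⟩) := hg ⟨_, hxg⟩ ⟨z, hzg⟩
    _ = inner 𝕜 x (f' ⟨g' ⟨z, hzg⟩, hzf⟩) := hf ⟨x, hxf⟩ ⟨_, hzf⟩

theorem IsRightInverse.inner_left_eq {K : E →ₗ.[𝕜] F} {K' : F →ₗ.[𝕜] E}
    (hK : K.IsFormalAdjoint K') {S : E → F} (hS : IsRightInverse K' S) (x : K.domain) (z : E) :
    inner 𝕜 (x : E) z = inner 𝕜 (K x) (S z) := by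
  obtain ⟨hz, hKz⟩ := hS z
  rw [hK x ⟨S z, hz⟩, hKz]

theorem IsRightInverse.injective {K : E →ₗ.[𝕜] F} {K' : F →ₗ.[𝕜] E}
    (hK : K.IsFormalAdjoint K') {S : E → F} (hS : IsRightInverse K' S) : Function.Injective K :=
  fun x y hxy ↦ Subtype.ext <| ext_inner_right 𝕜 fun z ↦ by
    rw [hS.inner_left_eq hK x, hS.inner_left_eq hK y, hxy]

theorem IsRightInverse.existsUnique {K : E →ₗ.[𝕜] E} (hK : K.IsFormalAdjoint K) {S : E → E}
    (hS : IsRightInverse K S) (y : E) : ∃! x, ∃ hx : x ∈ K.domain, K ⟨x, hx⟩ = y := by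
  refine ⟨S y, hS y, ?_⟩
  rintro x ⟨hx, hKx⟩
  obtain ⟨hSy, hKSy⟩ := hS y
  exact congrArg Subtype.val (hS.injective hK (hKx.trans hKSy.symm))

theorem IsRightInverse.isSelfAdjoint [CompleteSpace E] {K : E →ₗ.[𝕜] E}
    (hK : K.IsFormalAdjoint K) {S : E →L[𝕜] E} (hS : IsRightInverse K S) : IsSelfAdjoint S := by
  refine ContinuousLinearMap.isSelfAdjoint_iff_isSymmetric.2 fun y z ↦ ?_
  obtain ⟨hy, hKy⟩ := hS y
  exact (hS.inner_left_eq hK ⟨S y, hy⟩ z).trans (by rw [hKy]; rfl)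

end FormalAdjoint

section HodgeLaplacian

variable {𝕜 E F G : Type*} [RCLike 𝕜] [NormedAddCommGroup E] [InnerProductSpace 𝕜 E]
  [CompleteSpace E] [NormedAddCommGroup F] [InnerProductSpace 𝕜 F] [CompleteSpace F]
  [NormedAddCommGroup G] [InnerProductSpace 𝕜 G]

theorem RangeLEKer.adjoint {A : E →ₗ.[𝕜] F} {B : F →ₗ.[𝕜] G} (hA : Dense (A.domain : Set E))
    (hB : Dense (B.domain : Set F)) (hAB : RangeLEKer A B) : RangeLEKer B† A† := by
  intro u
  have inner_eq (x : A.domain) : inner 𝕜 (0 : E) x = inner 𝕜 (B† u) (A x) := by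
    obtain ⟨hAx, hBAx⟩ := hAB x
    rw [LinearPMap.adjoint_isFormalAdjoint hB u ⟨A x, hAx⟩, hBAx, inner_zero_left,
      inner_zero_right]
  exact ⟨LinearPMap.mem_adjoint_domain_of_exists _ ⟨0, inner_eq⟩,
    LinearPMap.adjoint_apply_eq hA _ inner_eq⟩

/-- The Laplacian `B†B + AA†` of `E → F → G`, with maps `A` and `B`, on its maximal domain. The
operator `P` of the theorem is the case `A = B = T`. -/
noncomputable def hodgeLaplacian (A : E →ₗ.[𝕜] F) (B : F →ₗ.[𝕜] G) : F →ₗ.[𝕜] F :=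
  maximalComp B† B + maximalComp A A†

theorem mem_domain_hodgeLaplacian {A : E →ₗ.[𝕜] F} {B : F →ₗ.[𝕜] G} {x : F} :
    x ∈ (hodgeLaplacian A B).domain ↔ ∃ (hB : x ∈ B.domain) (hA : x ∈ A†.domain),
      B ⟨x, hB⟩ ∈ B†.domain ∧ A† ⟨x, hA⟩ ∈ A.domain := by
  rw [hodgeLaplacian, LinearPMap.add_domain, Submodule.mem_inf, mem_domain_maximalComp,
    mem_domain_maximalComp, exists_and_exists_comm]

theorem hodgeLaplacian_apply {A : E →ₗ.[𝕜] F} {B : F →ₗ.[𝕜] G} {x : F}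
    (hx : x ∈ (hodgeLaplacian A B).domain) (hB : x ∈ B.domain) (hA : x ∈ A†.domain)
    (hB' : B ⟨x, hB⟩ ∈ B†.domain) (hA' : A† ⟨x, hA⟩ ∈ A.domain) :
    hodgeLaplacian A B ⟨x, hx⟩ = B† ⟨B ⟨x, hB⟩, hB'⟩ + A ⟨A† ⟨x, hA⟩, hA'⟩ :=
  rfl

theorem isFormalAdjoint_hodgeLaplacian {A : E →ₗ.[𝕜] F} {B : F →ₗ.[𝕜] G}
    (hA : Dense (A.domain : Set E)) (hB : Dense (B.domain : Set F)) :
    (hodgeLaplacian A B).IsFormalAdjoint (hodgeLaplacian A B) :=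
  have hA' := LinearPMap.adjoint_isFormalAdjoint hA
  have hB' := LinearPMap.adjoint_isFormalAdjoint hB
  isFormalAdjoint_add (isFormalAdjoint_maximalComp hB'.symm hB')
    (isFormalAdjoint_maximalComp hA' hA'.symm)

theorem stmt_2_general {A : E →ₗ.[𝕜] F} {B : F →ₗ.[𝕜] G} (hA : Dense (A.domain : Set E))
    (hB : Dense (B.domain : Set F)) (hAB : RangeLEKer A B) {M N : F →L[𝕜] F}
    (hM : IsRightInverse (idAdd (maximalComp A A†)) M)
    (hN : IsRightInverse (idAdd (maximalComp B† B)) N) :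
    IsSelfAdjoint (M + N - 1) ∧
    IsRightInverse (idAdd (hodgeLaplacian A B)) (M + N - 1 : F →L[𝕜] F) ∧
    ∀ y, ∃! x, ∃ hx : x ∈ (hodgeLaplacian A B).domain, x + hodgeLaplacian A B ⟨x, hx⟩ = y :=
  have hK := isFormalAdjoint_idAdd (isFormalAdjoint_hodgeLaplacian hA hB)
  have hS : IsRightInverse (idAdd (hodgeLaplacian A B)) (M + N - 1 : F →L[𝕜] F) :=
    isRightInverse_idAdd_add_sub_id hAB (hAB.adjoint hA hB) hM hN
  ⟨hS.isSelfAdjoint hK, hS, hS.existsUnique hK⟩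

end HodgeLaplacian

/-- With `B = (I + TT*)⁻¹` and `C = (I + T*T)⁻¹` the bounded self-adjoint inverses furnished by
von Neumann's lemma, `S := B + C - I` is a bounded self-adjoint operator whose range is contained
in `Dom P` and which satisfies `(I + P)S = I`; in particular `I + P : Dom P → H` is bijective
with bounded inverse `S`. -/
theorem stmt_2 {H : Type*} [NormedAddCommGroup H] [InnerProductSpace ℂ H] [CompleteSpace H]
    (T : H →ₗ.[ℂ] H) (hTd : Dense (T.domain : Set H)) (hTc : T.IsClosed)
    (hTr : ∀ u : T.domain, T u ∈ T.domain)
    (hT2 : ∀ u : T.domain, T ⟨T u, hTr u⟩ = 0)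
    (P : H →ₗ.[ℂ] H)
    (hPdom : ∀ x : H, x ∈ P.domain ↔
      ∃ (h1 : x ∈ T.domain) (h2 : x ∈ (T†).domain),
        T ⟨x, h1⟩ ∈ (T†).domain ∧ T† ⟨x, h2⟩ ∈ T.domain)
    (hPval : ∀ (x : H) (hx : x ∈ P.domain) (h1 : x ∈ T.domain) (h2 : x ∈ (T†).domain)
      (h3 : T ⟨x, h1⟩ ∈ (T†).domain) (h4 : T† ⟨x, h2⟩ ∈ T.domain),
      P ⟨x, hx⟩ = T† ⟨T ⟨x, h1⟩, h3⟩ + T ⟨T† ⟨x, h2⟩, h4⟩)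
    -- `B` is the bounded self-adjoint inverse of `I + TT*`
    (B : H →L[ℂ] H) (hBsa : IsSelfAdjoint B)
    (hB : ∀ y : H, ∃ (h1 : B y ∈ (T†).domain) (h2 : T† ⟨B y, h1⟩ ∈ T.domain),
      B y + T ⟨T† ⟨B y, h1⟩, h2⟩ = y)
    -- `C` is the bounded self-adjoint inverse of `I + T*T`
    (C : H →L[ℂ] H) (hCsa : IsSelfAdjoint C)
    (hC : ∀ y : H, ∃ (h1 : C y ∈ T.domain) (h2 : T ⟨C y, h1⟩ ∈ (T†).domain),
      C y + T† ⟨T ⟨C y, h1⟩, h2⟩ = y) :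
    IsSelfAdjoint (B + C - 1) ∧
    (∀ y : H, ∃ h : (B + C - 1) y ∈ P.domain,
      (B + C - 1) y + P ⟨(B + C - 1) y, h⟩ = y) ∧
    (∀ y : H, ∃! x : H, ∃ hx : x ∈ P.domain, x + P ⟨x, hx⟩ = y) := by
  obtain rfl : P = hodgeLaplacian T T := by
    refine LinearPMap.ext (Submodule.ext fun x ↦ ?_) fun x hx hx' ↦ ?_
    · exact (hPdom x).trans mem_domain_hodgeLaplacian.symm
    · obtain ⟨h1, h2, h3, h4⟩ := (hPdom x).1 hx
      rw [hPval x hx h1 h2 h3 h4, hodgeLaplacian_apply hx' h1 h2 h3 h4]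
  exact stmt_2_general hTd hTd (fun u ↦ ⟨hTr u, hT2 u⟩)
    (isRightInverse_idAdd_maximalComp_iff.2 hB) (isRightInverse_idAdd_maximalComp_iff.2 hC)
end

section
/- The Hilbert space V₂ decomposes orthogonally as V₂ = ker Q ⊕ R(Q), where ker Q = ker T|_{V₂} ∩ ker T*|_{V₂} and R(Q) = T(Dom T ∩ V₁) ⊕ T*(Dom T* ∩ V₃); in particular V₂ = (ker T|_{V₂} ∩ ker T*|_{V₂}) ⊕ T(Dom T ∩ V₁) ⊕ T*(Dom T* ∩ V₃) is an orthogonal decomposition into three pairwise orthogonal closed subspaces. -/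
open scoped LinearPMap

/-- `T'` is the restriction of the partially defined operator `T` to the subspaces `V` (source)
and `W` (target): the domain of `T'` consists exactly of the elements of `V` lying in the domain
of `T`, and the values of `T'` agree with those of `T` (in particular `T` maps `Dom T ∩ V`
into `W`). -/
def IsRestrictionOf {R E : Type*} [Ring R] [AddCommGroup E] [Module R E]
    (T : E →ₗ.[R] E) (V W : Submodule R E) (T' : ↥V →ₗ.[R] ↥W) : Prop :=
  (∀ u : V, u ∈ T'.domain ↔ (u : E) ∈ T.domain) ∧
  ∀ (u : V) (hu : u ∈ T'.domain) (hu' : (u : E) ∈ T.domain),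
    ((T' ⟨u, hu⟩ : W) : E) = T ⟨(u : E), hu'⟩

/-!
Let `A : X → Y` and `B : Y → Z` be closed, densely defined operators with closed ranges and
`B A = 0`, and let `Q = B†B + AA†`. The inner product of `Q x` with `x` is `‖B x‖² + ‖A† x‖²`, so
`ker Q = ker B ∩ ker A†`, where `ker A† = (ran A)ᗮ`. By the closed range theorem
`ran B† = (ker B)ᗮ`, and since `ran A ⊆ ker B` the space `Y` splits into `ran A`,
`ker B ∩ (ran A)ᗮ` and `(ker B)ᗮ`. For the range of `Q`, each `z = A u` may be written with
`u ∈ (ker A)ᗮ`, hence `u = A† w` with `w ∈ ran A ⊆ ker B`, so that `z = Q w`. Dually, each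
`z = B† w` may be written with `w = B u` and `u ∈ (ker B)ᗮ ⊆ ker A†`, so that `z = Q u`.
-/

section Graph

variable {R E F G : Type*} [Ring R] [AddCommGroup E] [Module R E] [AddCommGroup F] [Module R F]
  [AddCommGroup G] [Module R G]

/-- The kernel of a partially defined operator, as a submodule of the ambient space rather than of
the domain. -/
def partialKer (A : E →ₗ.[R] F) : Submodule R E :=
  A.toFun.ker.map A.domain.subtype

theorem mem_partialKer_iff {A : E →ₗ.[R] F} {x : E} : x ∈ partialKer A ↔ (x, 0) ∈ A.graph := by
  simp only [partialKer, Submodule.mem_map, LinearMap.mem_ker, LinearPMap.mem_graph_iff,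
    Submodule.subtype_apply, LinearPMap.toFun_eq_coe]
  exact exists_congr fun _ ↦ and_comm

theorem mem_range_toFun_iff {A : E →ₗ.[R] F} {y : F} :
    y ∈ A.toFun.range ↔ ∃ x, (x, y) ∈ A.graph :=
  LinearPMap.mem_range_iff

theorem range_le_partialKer {A : E →ₗ.[R] F} {B : F →ₗ.[R] G}
    (hdom : ∀ u : A.domain, A u ∈ B.domain)
    (hzero : ∀ u : A.domain, B ⟨A u, hdom u⟩ = 0) : A.toFun.range ≤ partialKer B := by
  rintro _ ⟨u, rfl⟩
  exact mem_partialKer_iff.2 ((LinearPMap.mem_graph_iff B).2 ⟨⟨A u, hdom u⟩, rfl, hzero u⟩)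

namespace IsRestrictionOf

variable {T : E →ₗ.[R] E} {V W : Submodule R E} {T' : V →ₗ.[R] W}

theorem exists_mem_graph (h : IsRestrictionOf T V W T') {v : V} {y : E}
    (hvy : ((v : E), y) ∈ T.graph) : ∃ w : W, (w : E) = y ∧ (v, w) ∈ T'.graph := by
  obtain ⟨u, hu, rfl⟩ := (LinearPMap.mem_graph_iff T).1 hvy
  obtain ⟨_, hv⟩ := u
  obtain rfl : _ = (v : E) := hu
  have hv' : v ∈ T'.domain := (h.1 v).2 hv
  exact ⟨T' ⟨v, hv'⟩, h.2 v hv' hv, T'.mem_graph ⟨v, hv'⟩⟩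

theorem mem_graph_iff (h : IsRestrictionOf T V W T') {v : V} {w : W} :
    (v, w) ∈ T'.graph ↔ ((v : E), (w : E)) ∈ T.graph := by
  constructor
  · intro hvw
    obtain ⟨u, rfl, rfl⟩ := (LinearPMap.mem_graph_iff T').1 hvw
    have hu : ((u : V) : E) ∈ T.domain := (h.1 u).1 u.2
    exact (LinearPMap.mem_graph_iff T).2 ⟨⟨_, hu⟩, rfl, (h.2 u u.2 hu).symm⟩
  · intro hvw
    obtain ⟨w', hw', hvw'⟩ := h.exists_mem_graph hvw
    rwa [← Subtype.ext hw']

theorem range_le_partialKer {U : Submodule R E} {S' : U →ₗ.[R] V} {S : E →ₗ.[R] E}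
    (hS : IsRestrictionOf S U V S') (hT : IsRestrictionOf T V W T')
    (hST : S.toFun.range ≤ partialKer T) : S'.toFun.range ≤ partialKer T' := by
  intro v hv
  obtain ⟨u, huv⟩ := mem_range_toFun_iff.1 hv
  have hv0 : (v : E) ∈ partialKer T := hST (mem_range_toFun_iff.2 ⟨u, hS.mem_graph_iff.1 huv⟩)
  exact mem_partialKer_iff.2 (hT.mem_graph_iff.2 (mem_partialKer_iff.1 hv0))

end IsRestrictionOf

end Graph

section Closed

variable {R E F : Type*} [CommRing R] [AddCommGroup E] [Module R E] [AddCommGroup F] [Module R F]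
  [TopologicalSpace E] [TopologicalSpace F]

theorem isClosed_partialKer {A : E →ₗ.[R] F} (hA : A.IsClosed) :
    IsClosed (partialKer A : Set E) := by
  have preimage_graph : (partialKer A : Set E) = (fun x ↦ (x, (0 : F))) ⁻¹' A.graph :=
    Set.ext fun _ ↦ mem_partialKer_iff
  rw [preimage_graph]
  exact IsClosed.preimage (by fun_prop) hA

theorem IsRestrictionOf.isClosed {T : E →ₗ.[R] E} {V W : Submodule R E} {T' : V →ₗ.[R] W}
    (h : IsRestrictionOf T V W T') (hT : T.IsClosed) : T'.IsClosed := by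
  have preimage_graph : (T'.graph : Set (V × W)) =
      (fun p : V × W ↦ ((p.1 : E), (p.2 : E))) ⁻¹' T.graph :=
    Set.ext fun _ ↦ h.mem_graph_iff
  rw [LinearPMap.IsClosed, preimage_graph]
  exact IsClosed.preimage (by fun_prop) hT

end Closed

section Adjoint

variable {𝕜 X Y : Type*} [RCLike 𝕜]
  [NormedAddCommGroup X] [InnerProductSpace 𝕜 X] [CompleteSpace X]
  [NormedAddCommGroup Y] [InnerProductSpace 𝕜 Y] {A : X →ₗ.[𝕜] Y}

theorem mem_graph_adjoint_iff (hd : Dense (A.domain : Set X)) {v : Y} {u : X} :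
    (v, u) ∈ A†.graph ↔ ∀ x y, (x, y) ∈ A.graph → inner 𝕜 y v = inner 𝕜 x u := by
  simp only [LinearPMap.adjoint_graph_eq_graph_adjoint hd, Submodule.mem_adjoint_iff, sub_eq_zero]

theorem partialKer_adjoint (hd : Dense (A.domain : Set X)) :
    partialKer A† = A.toFun.rangeᗮ := by
  ext v
  simp only [mem_partialKer_iff, mem_graph_adjoint_iff hd, inner_zero_right,
    Submodule.mem_orthogonal, mem_range_toFun_iff, forall_exists_index]
  exact forall_comm

theorem range_adjoint_le (hd : Dense (A.domain : Set X)) :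
    A†.toFun.range ≤ (partialKer A)ᗮ := by
  intro u hu x hx
  obtain ⟨v, hvu⟩ := mem_range_toFun_iff.1 hu
  rw [← (mem_graph_adjoint_iff hd).1 hvu x 0 (mem_partialKer_iff.1 hx), inner_zero_left]

theorem exists_mem_graph_mem_orthogonal (hA : A.IsClosed) {y : Y} (hy : y ∈ A.toFun.range) :
    ∃ x ∈ (partialKer A)ᗮ, (x, y) ∈ A.graph := by
  have : CompleteSpace (partialKer A) := (isClosed_partialKer hA).completeSpace_coe
  obtain ⟨x, hxy⟩ := mem_range_toFun_iff.1 hy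
  obtain ⟨k, hk, x', hx', rfl⟩ := (partialKer A).exists_add_mem_mem_orthogonal x
  refine ⟨x', hx', ?_⟩
  simpa only [Prod.mk_sub_mk, add_sub_cancel_left, sub_zero] using
    A.graph.sub_mem hxy (mem_partialKer_iff.1 hk)

variable [CompleteSpace Y]

theorem exists_continuousLinearMap_mem_graph (hA : A.IsClosed)
    (hR : IsClosed (A.toFun.range : Set Y)) :
    ∃ S : A.toFun.range →L[𝕜] X, ∀ y, (S y, (y : Y)) ∈ A.graph := by
  have : CompleteSpace A.toFun.range := hR.completeSpace_coe
  -- `A` is injective on `(ker A)ᗮ`, so the open mapping theorem applies to this part of its graph.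
  let N : Submodule 𝕜 (X × Y) := A.graph ⊓ (partialKer A)ᗮ.comap (LinearMap.fst 𝕜 X Y)
  have hN : IsClosed (N : Set (X × Y)) :=
    IsClosed.inter hA ((partialKer A).isClosed_orthogonal.preimage continuous_fst)
  have : CompleteSpace N := hN.completeSpace_coe
  let p : N →L[𝕜] A.toFun.range := ((ContinuousLinearMap.snd 𝕜 X Y).comp N.subtypeL).codRestrict _
    fun n ↦ mem_range_toFun_iff.2 ⟨_, n.2.1⟩
  have p_injective : p.ker = ⊥ := by
    refine LinearMap.ker_eq_bot'.2 ?_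
    rintro ⟨⟨x, y⟩, hxy, hx⟩ hp
    obtain rfl : y = 0 := congrArg Subtype.val hp
    obtain rfl : x = 0 := inner_self_eq_zero.1 (hx x (mem_partialKer_iff.2 hxy))
    rfl
  have p_surjective : p.range = ⊤ := by
    refine LinearMap.range_eq_top.2 ?_
    rintro ⟨y, hy⟩
    obtain ⟨x, hx, hxy⟩ := exists_mem_graph_mem_orthogonal hA hy
    exact ⟨⟨(x, y), hxy, hx⟩, rfl⟩
  let e := ContinuousLinearEquiv.ofBijective p p_injective p_surjective
  refine ⟨(ContinuousLinearMap.fst 𝕜 X Y).comp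
    (N.subtypeL.comp (e.symm : A.toFun.range →L[𝕜] N)), fun y ↦ ?_⟩
  have snd_symm_apply : (e.symm y : X × Y).2 = y := congrArg Subtype.val (e.apply_symm_apply y)
  rw [← snd_symm_apply]
  exact (e.symm y).2.1

theorem exists_mem_range_mem_graph_adjoint (hA : A.IsClosed) (hd : Dense (A.domain : Set X))
    (hR : IsClosed (A.toFun.range : Set Y)) {u : X} (hu : u ∈ (partialKer A)ᗮ) :
    ∃ w ∈ A.toFun.range, (w, u) ∈ A†.graph := by
  have : CompleteSpace A.toFun.range := hR.completeSpace_coe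
  obtain ⟨S, hS⟩ := exists_continuousLinearMap_mem_graph hA hR
  refine ⟨S.adjoint u, Subtype.coe_prop _, (mem_graph_adjoint_iff hd).2 fun x y hxy ↦ ?_⟩
  let r : A.toFun.range := ⟨y, mem_range_toFun_iff.2 ⟨x, hxy⟩⟩
  have sub_mem_ker : S r - x ∈ partialKer A := by
    rw [mem_partialKer_iff, ← sub_self y]
    exact A.graph.sub_mem (hS r) hxy
  calc inner 𝕜 y (S.adjoint u : Y) = inner 𝕜 (S r) u := S.adjoint_inner_right r u
    _ = inner 𝕜 x u := by rw [← sub_eq_zero, ← inner_sub_left, hu _ sub_mem_ker]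

theorem range_adjoint_eq (hA : A.IsClosed) (hd : Dense (A.domain : Set X))
    (hR : IsClosed (A.toFun.range : Set Y)) : A†.toFun.range = (partialKer A)ᗮ := by
  refine le_antisymm (range_adjoint_le hd) fun u hu ↦ ?_
  obtain ⟨w, -, hwu⟩ := exists_mem_range_mem_graph_adjoint hA hd hR hu
  exact mem_range_toFun_iff.2 ⟨w, hwu⟩

end Adjoint

theorem inf_orthogonal_sup_sup_orthogonal_eq_top {𝕜 Y : Type*} [RCLike 𝕜] [NormedAddCommGroup Y]
    [InnerProductSpace 𝕜 Y] {U K : Submodule 𝕜 Y} [U.HasOrthogonalProjection]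
    [K.HasOrthogonalProjection] (hUK : U ≤ K) : K ⊓ Uᗮ ⊔ (U ⊔ Kᗮ) = ⊤ := by
  rw [← sup_assoc, sup_comm _ U, inf_comm,
    Submodule.sup_orthogonal_inf_of_hasOrthogonalProjection hUK,
    Submodule.sup_orthogonal_of_hasOrthogonalProjection]

section HodgeLaplacian

variable {𝕜 X Y Z : Type*} [RCLike 𝕜]
  [NormedAddCommGroup X] [InnerProductSpace 𝕜 X] [CompleteSpace X]
  [NormedAddCommGroup Y] [InnerProductSpace 𝕜 Y] [CompleteSpace Y]
  [NormedAddCommGroup Z] [InnerProductSpace 𝕜 Z]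

/-- `Q` is the Hodge Laplacian `B†B + AA†` of the sequence of operators `A` and `B`, with its
natural domain. The condition is phrased through graphs: `Q x = z` means `z = b + a` with
`b = B† (B x)` and `a = A (A† x)`, all terms being defined. -/
def IsHodgeLaplacian (A : X →ₗ.[𝕜] Y) (B : Y →ₗ.[𝕜] Z) (Q : Y →ₗ.[𝕜] Y) : Prop :=
  ∀ x z, (x, z) ∈ Q.graph ↔ ∃ v b w a, (x, v) ∈ B.graph ∧ (v, b) ∈ B†.graph ∧
    (x, w) ∈ A†.graph ∧ (w, a) ∈ A.graph ∧ b + a = z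

variable {A : X →ₗ.[𝕜] Y} {B : Y →ₗ.[𝕜] Z} {Q : Y →ₗ.[𝕜] Y}

namespace IsHodgeLaplacian

theorem of_domain_of_apply
    (hdom : ∀ x, x ∈ Q.domain ↔ ∃ (h1 : x ∈ B.domain) (h2 : x ∈ A†.domain),
      B ⟨x, h1⟩ ∈ B†.domain ∧ A† ⟨x, h2⟩ ∈ A.domain)
    (hval : ∀ (x : Y) (hx : x ∈ Q.domain) (h1 : x ∈ B.domain) (h2 : x ∈ A†.domain)
      (h3 : B ⟨x, h1⟩ ∈ B†.domain) (h4 : A† ⟨x, h2⟩ ∈ A.domain),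
      Q ⟨x, hx⟩ = B† ⟨B ⟨x, h1⟩, h3⟩ + A ⟨A† ⟨x, h2⟩, h4⟩) :
    IsHodgeLaplacian A B Q := by
  simp only [IsHodgeLaplacian, LinearPMap.mem_graph_iff]
  intro x z
  constructor
  · rintro ⟨⟨x, hx⟩, rfl, rfl⟩
    obtain ⟨h1, h2, h3, h4⟩ := (hdom x).1 hx
    exact ⟨_, _, _, _, ⟨⟨x, h1⟩, rfl, rfl⟩, ⟨⟨_, h3⟩, rfl, rfl⟩, ⟨⟨x, h2⟩, rfl, rfl⟩,
      ⟨⟨_, h4⟩, rfl, rfl⟩, (hval x hx h1 h2 h3 h4).symm⟩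
  · rintro ⟨_, _, _, _, ⟨⟨x, h1⟩, rfl, rfl⟩, ⟨⟨_, h3⟩, rfl, rfl⟩, ⟨⟨y, h2⟩, hyx, rfl⟩,
      ⟨⟨_, h4⟩, rfl, rfl⟩, rfl⟩
    obtain rfl : x = y := hyx.symm
    have hx : x ∈ Q.domain := (hdom x).2 ⟨h1, h2, h3, h4⟩
    exact ⟨⟨x, hx⟩, rfl, hval x hx h1 h2 h3 h4⟩

theorem restrict {T P : X →ₗ.[𝕜] X} (hP : IsHodgeLaplacian T T P) {V₁ V₂ V₃ : Submodule 𝕜 X}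
    [CompleteSpace V₁] [CompleteSpace V₂] {T₁ : V₁ →ₗ.[𝕜] V₂} {T₂ : V₂ →ₗ.[𝕜] V₃}
    {Q : V₂ →ₗ.[𝕜] V₂} (hT₁ : IsRestrictionOf T V₁ V₂ T₁) (hT₂ : IsRestrictionOf T V₂ V₃ T₂)
    (hS₂ : IsRestrictionOf T† V₂ V₁ T₁†) (hS₃ : IsRestrictionOf T† V₃ V₂ T₂†)
    (hQ : IsRestrictionOf P V₂ V₂ Q) : IsHodgeLaplacian T₁ T₂ Q := by
  intro x z
  rw [hQ.mem_graph_iff, hP]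
  constructor
  · rintro ⟨v, b, w, a, hv, hb, hw, ha, hz⟩
    obtain ⟨v, rfl, hv'⟩ := hT₂.exists_mem_graph hv
    obtain ⟨b, rfl, hb'⟩ := hS₃.exists_mem_graph hb
    obtain ⟨w, rfl, hw'⟩ := hS₂.exists_mem_graph hw
    obtain ⟨a, rfl, ha'⟩ := hT₁.exists_mem_graph ha
    exact ⟨v, b, w, a, hv', hb', hw', ha', Subtype.ext hz⟩
  · rintro ⟨v, b, w, a, hv, hb, hw, ha, rfl⟩
    exact ⟨v, b, w, a, hT₂.mem_graph_iff.1 hv, hS₃.mem_graph_iff.1 hb, hS₂.mem_graph_iff.1 hw,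
      hT₁.mem_graph_iff.1 ha, rfl⟩

end IsHodgeLaplacian

theorem re_inner_add_eq_norm_sq_add_norm_sq (hAd : Dense (A.domain : Set X))
    (hBd : Dense (B.domain : Set Y)) {x b a : Y} {v : Z} {w : X} (hv : (x, v) ∈ B.graph)
    (hb : (v, b) ∈ B†.graph) (hw : (x, w) ∈ A†.graph) (ha : (w, a) ∈ A.graph) :
    RCLike.re (inner 𝕜 (b + a) x) = ‖v‖ ^ 2 + ‖w‖ ^ 2 := by
  have inner_b : inner 𝕜 v v = inner 𝕜 x b := (mem_graph_adjoint_iff hBd).1 hb x v hv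
  have inner_a : inner 𝕜 a x = inner 𝕜 w w := (mem_graph_adjoint_iff hAd).1 hw w a ha
  rw [inner_add_left, map_add, inner_re_symm, ← inner_b, inner_a, inner_self_eq_norm_sq,
    inner_self_eq_norm_sq]

namespace IsHodgeLaplacian

theorem partialKer_eq (hQ : IsHodgeLaplacian A B Q) (hAd : Dense (A.domain : Set X))
    (hBd : Dense (B.domain : Set Y)) : partialKer Q = partialKer B ⊓ partialKer A† := by
  ext x
  simp only [Submodule.mem_inf, mem_partialKer_iff]
  constructor
  · intro hx
    obtain ⟨v, b, w, a, hv, hb, hw, ha, hsum⟩ := (hQ x 0).1 hx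
    have norms : ‖v‖ ^ 2 + ‖w‖ ^ 2 = 0 := by
      rw [← re_inner_add_eq_norm_sq_add_norm_sq hAd hBd hv hb hw ha, hsum, inner_zero_left,
        map_zero]
    obtain ⟨norm_v, norm_w⟩ := (add_eq_zero_iff_of_nonneg (sq_nonneg _) (sq_nonneg _)).1 norms
    obtain rfl : v = 0 := norm_eq_zero.1 (sq_eq_zero_iff.1 norm_v)
    obtain rfl : w = 0 := norm_eq_zero.1 (sq_eq_zero_iff.1 norm_w)
    exact ⟨hv, hw⟩
  · rintro ⟨hv, hw⟩
    exact (hQ x 0).2 ⟨0, 0, 0, 0, hv, B†.graph.zero_mem, hw, A.graph.zero_mem, add_zero 0⟩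

theorem range_left_le (hQ : IsHodgeLaplacian A B Q) (hA : A.IsClosed)
    (hAd : Dense (A.domain : Set X)) (hAR : IsClosed (A.toFun.range : Set Y))
    (hBA : A.toFun.range ≤ partialKer B) : A.toFun.range ≤ Q.toFun.range := by
  intro z hz
  obtain ⟨u, hu, huz⟩ := exists_mem_graph_mem_orthogonal hA hz
  obtain ⟨w, hw, hwu⟩ := exists_mem_range_mem_graph_adjoint hA hAd hAR hu
  exact mem_range_toFun_iff.2 ⟨w, (hQ w z).2 ⟨0, 0, u, z, mem_partialKer_iff.1 (hBA hw),
    B†.graph.zero_mem, hwu, huz, zero_add z⟩⟩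

theorem range_adjoint_right_le [CompleteSpace Z] (hQ : IsHodgeLaplacian A B Q)
    (hAd : Dense (A.domain : Set X)) (hB : B.IsClosed) (hBd : Dense (B.domain : Set Y))
    (hBR : IsClosed (B.toFun.range : Set Z)) (hBA : A.toFun.range ≤ partialKer B) :
    B†.toFun.range ≤ Q.toFun.range := by
  intro z hz
  obtain ⟨w, hw, hwz⟩ := exists_mem_range_mem_graph_adjoint hB hBd hBR (range_adjoint_le hBd hz)
  obtain ⟨u, hu, huw⟩ := exists_mem_graph_mem_orthogonal hB hw
  have hu' : u ∈ partialKer A† := by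
    rw [partialKer_adjoint hAd]
    exact Submodule.orthogonal_le hBA hu
  exact mem_range_toFun_iff.2 ⟨u, (hQ u z).2 ⟨w, z, 0, 0, huw, hwz, mem_partialKer_iff.1 hu',
    A.graph.zero_mem, add_zero z⟩⟩

theorem range_le (hQ : IsHodgeLaplacian A B Q) :
    Q.toFun.range ≤ A.toFun.range ⊔ B†.toFun.range := by
  intro z hz
  obtain ⟨x, hxz⟩ := mem_range_toFun_iff.1 hz
  obtain ⟨v, b, w, a, -, hb, -, ha, rfl⟩ := (hQ x z).1 hxz
  rw [sup_comm]
  exact Submodule.add_mem_sup (mem_range_toFun_iff.2 ⟨v, hb⟩) (mem_range_toFun_iff.2 ⟨w, ha⟩)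

end IsHodgeLaplacian

theorem stmt_6_general [CompleteSpace Z]
    (hA : A.IsClosed) (hAd : Dense (A.domain : Set X)) (hAR : IsClosed (A.toFun.range : Set Y))
    (hB : B.IsClosed) (hBd : Dense (B.domain : Set Y)) (hBR : IsClosed (B.toFun.range : Set Z))
    (hBA : A.toFun.range ≤ partialKer B) (hQ : IsHodgeLaplacian A B Q) :
    partialKer Q = partialKer B ⊓ partialKer A† ∧
    Q.toFun.range = A.toFun.range ⊔ B†.toFun.range ∧
    partialKer Q ≤ A.toFun.rangeᗮ ∧
    partialKer Q ≤ B†.toFun.rangeᗮ ∧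
    A.toFun.range ≤ B†.toFun.rangeᗮ ∧
    IsClosed (partialKer Q : Set Y) ∧
    IsClosed (A.toFun.range : Set Y) ∧
    IsClosed (B†.toFun.range : Set Y) ∧
    partialKer Q ⊔ Q.toFun.range = ⊤ := by
  have : CompleteSpace (partialKer B) := (isClosed_partialKer hB).completeSpace_coe
  have : CompleteSpace A.toFun.range := hAR.completeSpace_coe
  have ker_Q := hQ.partialKer_eq hAd hBd
  have range_Q : Q.toFun.range = A.toFun.range ⊔ B†.toFun.range :=
    hQ.range_le.antisymm (sup_le (hQ.range_left_le hA hAd hAR hBA)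
      (hQ.range_adjoint_right_le hAd hB hBd hBR hBA))
  have ker_B_le : partialKer B ≤ B†.toFun.rangeᗮ :=
    (Submodule.le_orthogonal_orthogonal _).trans (Submodule.orthogonal_le (range_adjoint_le hBd))
  refine ⟨ker_Q, range_Q, ?_, ?_, hBA.trans ker_B_le, ?_, hAR, ?_, ?_⟩
  · exact ker_Q.le.trans (inf_le_right.trans (partialKer_adjoint hAd).le)
  · exact ker_Q.le.trans (inf_le_left.trans ker_B_le)
  · rw [ker_Q, partialKer_adjoint hAd]
    exact (isClosed_partialKer hB).inter (Submodule.isClosed_orthogonal _)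
  · rw [range_adjoint_eq hB hBd hBR]
    exact Submodule.isClosed_orthogonal _
  · rw [range_Q, ker_Q, partialKer_adjoint hAd, range_adjoint_eq hB hBd hBR]
    exact inf_orthogonal_sup_sup_orthogonal_eq_top hBA

end HodgeLaplacian

theorem stmt_6 {H : Type*} [NormedAddCommGroup H] [InnerProductSpace ℂ H] [CompleteSpace H]
    -- `T` is closed and densely defined, with range contained in `Dom T` and `T² = 0`
    (T : H →ₗ.[ℂ] H) (hTd : Dense (T.domain : Set H)) (hTc : T.IsClosed)
    (hTr : ∀ u : T.domain, T u ∈ T.domain)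
    (hT2 : ∀ u : T.domain, T ⟨T u, hTr u⟩ = 0)
    -- `P = T*T + TT*` with its natural domain; `P` is self-adjoint
    (P : H →ₗ.[ℂ] H)
    (hPdom : ∀ x : H, x ∈ P.domain ↔
      ∃ (h1 : x ∈ T.domain) (h2 : x ∈ (T†).domain),
        T ⟨x, h1⟩ ∈ (T†).domain ∧ T† ⟨x, h2⟩ ∈ T.domain)
    (hPval : ∀ (x : H) (hx : x ∈ P.domain) (h1 : x ∈ T.domain) (h2 : x ∈ (T†).domain)
      (h3 : T ⟨x, h1⟩ ∈ (T†).domain) (h4 : T† ⟨x, h2⟩ ∈ T.domain),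
      P ⟨x, hx⟩ = T† ⟨T ⟨x, h1⟩, h3⟩ + T ⟨T† ⟨x, h2⟩, h4⟩)
    (hPsa : IsSelfAdjoint P)
    -- the closed subspaces `V₁, V₂, V₃`
    (V₁ V₂ V₃ : Submodule ℂ H)
    (hV₁ : IsClosed (V₁ : Set H)) (hV₂ : IsClosed (V₂ : Set H)) (hV₃ : IsClosed (V₃ : Set H))
    [CompleteSpace V₁] [CompleteSpace V₂] [CompleteSpace V₃]
    -- `T₁ = T|_{V₁} : V₁ ⇀ V₂` and `T₂ = T|_{V₂} : V₂ ⇀ V₃`, densely defined with closed range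
    (T₁ : ↥V₁ →ₗ.[ℂ] ↥V₂) (hT₁ : IsRestrictionOf T V₁ V₂ T₁)
    (hT₁d : Dense (T₁.domain : Set V₁))
    (T₂ : ↥V₂ →ₗ.[ℂ] ↥V₃) (hT₂ : IsRestrictionOf T V₂ V₃ T₂)
    (hT₂d : Dense (T₂.domain : Set V₂))
    (hR₁ : IsClosed ((LinearMap.range T₁.toFun : Submodule ℂ V₂) : Set V₂))
    (hR₂ : IsClosed ((LinearMap.range T₂.toFun : Submodule ℂ V₃) : Set V₃))
    -- `S₂ = T*|_{V₂} : V₂ ⇀ V₁` and `S₃ = T*|_{V₃} : V₃ ⇀ V₂`; the adjoint of `T|_{V₁}` is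
    -- `T*|_{V₂}` and the adjoint of `T|_{V₂}` is `T*|_{V₃}`
    (S₂ : ↥V₂ →ₗ.[ℂ] ↥V₁) (hS₂ : IsRestrictionOf (T†) V₂ V₁ S₂)
    (S₃ : ↥V₃ →ₗ.[ℂ] ↥V₂) (hS₃ : IsRestrictionOf (T†) V₃ V₂ S₃)
    (hadj₁ : T₁† = S₂) (hadj₂ : T₂† = S₃)
    -- `Q = P|_{V₂}`
    (Q : ↥V₂ →ₗ.[ℂ] ↥V₂) (hQ : IsRestrictionOf P V₂ V₂ Q)
    :
    -- `ker Q = ker T|_{V₂} ∩ ker T*|_{V₂}`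
    (LinearMap.ker Q.toFun).map Q.domain.subtype =
      ((LinearMap.ker T₂.toFun).map T₂.domain.subtype) ⊓
        ((LinearMap.ker S₂.toFun).map S₂.domain.subtype) ∧
    -- `R(Q) = T(Dom T ∩ V₁) ⊕ T*(Dom T* ∩ V₃)`
    LinearMap.range Q.toFun = LinearMap.range T₁.toFun ⊔ LinearMap.range S₃.toFun ∧
    -- the three subspaces are pairwise orthogonal ...
    (LinearMap.ker Q.toFun).map Q.domain.subtype ≤ (LinearMap.range T₁.toFun)ᗮ ∧
    (LinearMap.ker Q.toFun).map Q.domain.subtype ≤ (LinearMap.range S₃.toFun)ᗮ ∧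
    LinearMap.range T₁.toFun ≤ (LinearMap.range S₃.toFun)ᗮ ∧
    -- ... and closed ...
    IsClosed (((LinearMap.ker Q.toFun).map Q.domain.subtype : Submodule ℂ V₂) : Set V₂) ∧
    IsClosed ((LinearMap.range T₁.toFun : Submodule ℂ V₂) : Set V₂) ∧
    IsClosed ((LinearMap.range S₃.toFun : Submodule ℂ V₂) : Set V₂) ∧
    -- ... and `V₂ = ker Q ⊕ R(Q)` decomposes orthogonally
    (LinearMap.ker Q.toFun).map Q.domain.subtype ⊔ LinearMap.range Q.toFun = ⊤ := by
  subst hadj₁ hadj₂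
  exact stmt_6_general (hT₁.isClosed hTc) hT₁d hR₁ (hT₂.isClosed hTc) hT₂d hR₂
    (hT₁.range_le_partialKer hT₂ (range_le_partialKer hTr hT2))
    ((IsHodgeLaplacian.of_domain_of_apply hPdom hPval).restrict hT₁ hT₂ hS₂ hS₃ hQ)
end
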